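/- Let T > 0, let x_n : [0,T] → ℝ be càdlàg functions, and let x̂, x̌ : [0,T] → ℝ be càdlàg. Assume: (1) (x_n) converges to x̌ in the Skorokhod sense on [0,T]; (2) ∫_0^T |x_n(t) − x̂(t)|² dt → 0 as n → ∞. Then x̂(t) = x̌(t) for every t ∈ [0,T). -/

import Mathlib

/-!
Just to the right of a point `t` at which `x̌` is right-continuous, the time changes `λₙ` are
harmless: for `s > t` close to `t`, the convergence `λₙ s → s` keeps `λₙ s` in the region where `x̌`
is close to `x̌ t`, so `xₙ s` is eventually close to `x̌ t`. A subsequence of `xₙ` converges a.e. to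
`x̂`, so `x̂ s` is close to `x̌ t` for a dense set of such `s`, and letting `s ↓ t` gives
`x̂ t = x̌ t`.
-/

open MeasureTheory Filter Topology Set

noncomputable section

/-- Skorokhod convergence on `[0,T]`. -/
def SkorokhodTendstoOn {E : Type*} [NormedAddCommGroup E]
    (x : ℕ → ℝ → E) (y : ℝ → E) (T : ℝ) : Prop :=
  ∃ lam : ℕ → ℝ → ℝ,
    (∀ k, ContinuousOn (lam k) (Set.Icc 0 T)) ∧
    (∀ k, StrictMonoOn (lam k) (Set.Icc 0 T)) ∧
    (∀ k, Set.BijOn (lam k) (Set.Icc 0 T) (Set.Icc 0 T)) ∧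
    (∀ ε > 0, ∀ᶠ k in Filter.atTop, ∀ t ∈ Set.Icc 0 T, |lam k t - t| < ε) ∧
    (∀ ε > 0, ∀ᶠ k in Filter.atTop, ∀ t ∈ Set.Icc 0 T, ‖x k t - y (lam k t)‖ < ε)

/-- `x` is càdlàg on `[0,T]`: right-continuous at every point of `[0,T)`
and with a left limit at every point of `(0,T]`. -/
def CadlagOn (x : ℝ → ℝ) (T : ℝ) : Prop :=
  (∀ t ∈ Set.Ico 0 T, ContinuousWithinAt x (Set.Icc t T) t) ∧
  (∀ t ∈ Set.Ioc 0 T, ∃ L : ℝ, Filter.Tendsto x (nhdsWithin t (Set.Iio t)) (nhds L))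

theorem frequently_nhdsWithin_of_ae {α : Type*} [TopologicalSpace α] [MeasurableSpace α]
    {μ : Measure α} [μ.IsOpenPosMeasure] {U : Set α} (hU : IsOpen U) {t : α} [(𝓝[U] t).NeBot]
    {p : α → Prop} (hp : ∀ᵐ s ∂μ, p s) : ∃ᶠ s in 𝓝[U] t, p s := by
  have hmem : t ∈ closure U := mem_closure_iff_nhdsWithin_neBot.2 ‹_›
  have hsubset : U ⊆ closure (U ∩ {s | p s}) :=
    (Measure.dense_of_ae hp).open_subset_closure_inter hU
  have hmem_inter := closure_minimal hsubset isClosed_closure hmem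
  rw [inter_comm] at hmem_inter
  exact frequently_nhdsWithin_iff.2 (mem_closure_iff_frequently.1 hmem_inter)

theorem tendstoInMeasure_of_tendsto_integral_norm_sub_rpow {α ι E : Type*} [MeasurableSpace α]
    {μ : Measure α} [NormedAddCommGroup E] {l : Filter ι} {f : ι → α → E} {g : α → E} {p : ℝ}
    (hp : 0 < p) (hint : ∀ n, Integrable (fun s => ‖f n s - g s‖ ^ p) μ)
    (hlim : Tendsto (fun n => ∫ s, ‖f n s - g s‖ ^ p ∂μ) l (𝓝 0)) :
    TendstoInMeasure μ f l g := by
  have hpow : TendstoInMeasure μ (fun n s => ‖f n s - g s‖ ^ p) l 0 := by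
    refine tendstoInMeasure_of_tendsto_eLpNorm one_ne_zero
      (fun n => (hint n).aestronglyMeasurable) aestronglyMeasurable_zero ?_
    have heLp : ∀ n, eLpNorm ((fun s => ‖f n s - g s‖ ^ p) - 0) 1 μ =
        ENNReal.ofReal (∫ s, ‖f n s - g s‖ ^ p ∂μ) := fun n => by
      rw [sub_zero, eLpNorm_one_eq_lintegral_enorm,
        ← ofReal_integral_norm_eq_lintegral_enorm (hint n)]
      simp only [Real.norm_of_nonneg (Real.rpow_nonneg (norm_nonneg _) p)]
    simpa only [heLp, ENNReal.ofReal_zero] using ENNReal.tendsto_ofReal hlim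
  rw [tendstoInMeasure_iff_norm] at hpow ⊢
  intro ε hε
  have hset : ∀ n, {s | ε ^ p ≤ ‖‖f n s - g s‖ ^ p - (0 : α → ℝ) s‖} =
      {s | ε ≤ ‖f n s - g s‖} := fun n => by
    ext s
    simp only [mem_ofPred_eq, Pi.zero_apply, sub_zero,
      Real.norm_of_nonneg (Real.rpow_nonneg (norm_nonneg _) p),
      Real.rpow_le_rpow_iff hε.le (norm_nonneg _) hp]
  simpa only [hset] using hpow (ε ^ p) (Real.rpow_pos_of_pos hε p)

theorem measurable_domRestrict_of_continuousWithinAt_Ioi {α β : Type*} [TopologicalSpace α]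
    [LinearOrder α] [OrderTopology α] [SecondCountableTopology α] [MeasurableSpace α]
    [BorelSpace α] [TopologicalSpace β] [MeasurableSpace β] [BorelSpace β] {f : α → β}
    {s : Set α} (hs : ∀ t ∈ s, s ∈ 𝓝[>] t) (hf : ∀ t ∈ s, ContinuousWithinAt f (Ioi t) t) :
    Measurable (s.domRestrict f) := by
  refine measurable_of_isOpen fun U hU => ?_
  have hmeas : MeasurableSet (s ∩ f ⁻¹' U) := .of_mem_nhdsGT fun t ht =>
    inter_mem (hs t ht.1) (hf t ht.1 (hU.mem_nhds ht.2))
  have hpre : MeasurableSet ((↑) ⁻¹' (s ∩ f ⁻¹' U) : Set s) := measurable_subtype_coe hmeas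
  rwa [Subtype.preimage_coe_self_inter] at hpre

theorem integrableOn_of_isCompact_of_tendsto_left_right {α E : Type*} [TopologicalSpace α]
    [LinearOrder α] [OrderClosedTopology α] [MeasurableSpace α] [OpensMeasurableSpace α]
    {μ : Measure α} [IsLocallyFiniteMeasure μ] [NormedAddCommGroup E] {f : α → E} {K : Set α}
    (hK : IsCompact K)
    (hf : AEStronglyMeasurable f (μ.restrict K))
    (hleft : ∀ t ∈ K, ∃ L, Tendsto f (𝓝[K ∩ Iio t] t) (𝓝 L))
    (hright : ∀ t ∈ K, ∃ R, Tendsto f (𝓝[K ∩ Ioi t] t) (𝓝 R)) :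
    IntegrableOn f K μ := by
  refine LocallyIntegrableOn.integrableOn_isCompact (fun t ht => ?_) hK
  have hlocal : ∀ {s : Set α}, MeasurableSet s → s ⊆ K → (∃ y, Tendsto f (𝓝[s] t) (𝓝 y)) →
      IntegrableAtFilter f (𝓝[s] t) μ := fun {s} hs hsK ⟨y, hy⟩ =>
    have := hs.nhdsWithin_isMeasurablyGenerated t
    hy.integrableAtFilter ⟨s, self_mem_nhdsWithin, hf.mono_set hsK⟩ (μ.finiteAt_nhdsWithin t s)
  have hcover : K = K ∩ Iio t ∪ K ∩ Ioi t ∪ {t} := by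
    rw [← inter_union_distrib_left, Iio_union_Ioi, ← sdiff_eq, sdiff_union_self,
      union_eq_self_of_subset_right (singleton_subset_iff.2 ht)]
  rw [hcover, nhdsWithin_union, nhdsWithin_union]
  refine IntegrableAtFilter.sup_iff.2 ⟨IntegrableAtFilter.sup_iff.2 ⟨?_, ?_⟩, ?_⟩
  · exact hlocal (hK.measurableSet.inter measurableSet_Iio) inter_subset_left (hleft t ht)
  · exact hlocal (hK.measurableSet.inter measurableSet_Ioi) inter_subset_left (hright t ht)
  · exact hlocal (measurableSet_singleton t) (singleton_subset_iff.2 ht)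
      ⟨f t, continuousWithinAt_singleton⟩

namespace CadlagOn

variable {f g : ℝ → ℝ} {T : ℝ}

theorem continuousWithinAt_Ioi (hf : CadlagOn f T) {t : ℝ} (ht : t ∈ Ico 0 T) :
    ContinuousWithinAt f (Ioi t) t :=
  continuousWithinAt_Ioi_iff_Ici.2 ((continuousWithinAt_Icc_iff_Ici ht.2).1 (hf.1 t ht))

theorem sub (hf : CadlagOn f T) (hg : CadlagOn g T) : CadlagOn (fun t => f t - g t) T := by
  refine ⟨fun t ht => (hf.1 t ht).sub (hg.1 t ht), fun t ht => ?_⟩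
  obtain ⟨L, hL⟩ := hf.2 t ht
  obtain ⟨M, hM⟩ := hg.2 t ht
  exact ⟨L - M, hL.sub hM⟩

theorem continuous_comp {φ : ℝ → ℝ} (hφ : Continuous φ) (hf : CadlagOn f T) :
    CadlagOn (fun t => φ (f t)) T :=
  ⟨fun t ht => hφ.continuousAt.comp_continuousWithinAt (hf.1 t ht), fun t ht =>
    (hf.2 t ht).imp' φ fun L hL => (hφ.tendsto L).comp hL⟩

theorem aemeasurable (hf : CadlagOn f T) : AEMeasurable f (volume.restrict (Icc 0 T)) := by
  rw [← Measure.restrict_congr_set (Ico_ae_eq_Icc (a := 0) (b := T))]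
  exact aemeasurable_restrict_of_measurable_subtype measurableSet_Ico <|
    measurable_domRestrict_of_continuousWithinAt_Ioi (fun _ ht => Ico_mem_nhdsGT_of_mem ht)
      fun _ => hf.continuousWithinAt_Ioi

theorem integrableOn_Icc (hf : CadlagOn f T) : IntegrableOn f (Icc 0 T) := by
  refine integrableOn_of_isCompact_of_tendsto_left_right isCompact_Icc
    hf.aemeasurable.aestronglyMeasurable (fun t ht => ?_) fun t ht => ?_
  · obtain rfl | ht0 := ht.1.eq_or_lt
    · have hempty : Icc 0 T ∩ Iio 0 = ∅ := (disjoint_left.2 fun s hs => hs.1.not_gt).inter_eq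
      exact ⟨0, by simp [hempty]⟩
    · exact (hf.2 t ⟨ht0, ht.2⟩).imp fun L hL => hL.mono_left (nhdsWithin_mono t inter_subset_right)
  · obtain rfl | htT := ht.2.eq_or_lt
    · have hempty : Icc 0 t ∩ Ioi t = ∅ := (disjoint_left.2 fun s hs => hs.2.not_gt).inter_eq
      exact ⟨0, by simp [hempty]⟩
    · exact ⟨f t, (hf.continuousWithinAt_Ioi ⟨ht.1, htT⟩).mono inter_subset_right⟩

theorem tendstoInMeasure_of_tendsto_integral_sq {ι : Type*} {l : Filter ι} {x : ι → ℝ → ℝ}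
    (hx : ∀ n, CadlagOn (x n) T) (hf : CadlagOn f T)
    (hlim : Tendsto (fun n => ∫ t in Icc 0 T, |x n t - f t| ^ 2) l (𝓝 0)) :
    TendstoInMeasure (volume.restrict (Icc 0 T)) x l f := by
  have hint : ∀ n, Integrable (fun t => |x n t - f t| ^ 2) (volume.restrict (Icc 0 T)) := fun n =>
    (((hx n).sub hf).continuous_comp (continuous_abs.pow 2)).integrableOn_Icc
  refine tendstoInMeasure_of_tendsto_integral_norm_sub_rpow two_pos ?_ ?_
  · simpa only [Real.norm_eq_abs, Real.rpow_two] using hint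
  · simpa only [Real.norm_eq_abs, Real.rpow_two] using hlim

end CadlagOn

namespace SkorokhodTendstoOn

variable {E : Type*} [NormedAddCommGroup E] {x : ℕ → ℝ → E} {y : ℝ → E} {T : ℝ}

theorem exists_seq_tendsto (h : SkorokhodTendstoOn x y T) {s : ℝ} (hs : s ∈ Icc 0 T) :
    ∃ r : ℕ → ℝ, Tendsto r atTop (𝓝 s) ∧ Tendsto (fun n => x n s - y (r n)) atTop (𝓝 0) := by
  obtain ⟨lam, -, -, -, hlam, hx⟩ := h
  refine ⟨fun n => lam n s, Metric.tendsto_nhds.2 fun ε hε => ?_,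
    Metric.tendsto_nhds.2 fun ε hε => ?_⟩
  · exact (hlam ε hε).mono fun n hn => hn s hs
  · exact (hx ε hε).mono fun n hn => by simpa only [dist_zero_right] using hn s hs

theorem eventually_nhdsGT_eventually_dist_lt (h : SkorokhodTendstoOn x y T) {t : ℝ}
    (ht : t ∈ Ico 0 T) (hy : ContinuousWithinAt y (Ioi t) t) {ε : ℝ} (hε : 0 < ε) :
    ∀ᶠ s in 𝓝[>] t, ∀ᶠ n in atTop, dist (x n s) (y t) < ε := by
  have hnear : ∀ᶠ s in 𝓝[>] t, ∀ᶠ r in 𝓝 s, dist (y r) (y t) < ε / 2 := by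
    filter_upwards [self_mem_nhdsWithin, eventually_eventually_nhdsWithin.2
      (Metric.tendsto_nhds.1 hy (ε / 2) (half_pos hε))] with s hts hs
    rwa [isOpen_Ioi.nhdsWithin_eq hts] at hs
  filter_upwards [hnear, Ioo_mem_nhdsGT ht.2] with s hs hsT
  obtain ⟨r, hr, hxr⟩ := h.exists_seq_tendsto ⟨ht.1.trans hsT.1.le, hsT.2.le⟩
  filter_upwards [hr.eventually hs, Metric.tendsto_nhds.1 hxr (ε / 2) (half_pos hε)]
    with n hyr hxn
  rw [dist_zero_right, ← dist_eq_norm] at hxn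
  linarith [dist_triangle (x n s) (y (r n)) (y t)]

end SkorokhodTendstoOn

theorem statement13_general {E : Type*} [NormedAddCommGroup E] {T : ℝ} {μ : Measure ℝ}
    [μ.IsOpenPosMeasure] {xn : ℕ → ℝ → E} {xhat xcheck : ℝ → E}
    (hSkorokhod : SkorokhodTendstoOn xn xcheck T)
    (hmeasure : TendstoInMeasure (μ.restrict (Icc 0 T)) xn atTop xhat)
    {t : ℝ} (ht : t ∈ Ico 0 T) (hxhat : ContinuousWithinAt xhat (Ioi t) t)
    (hxcheck : ContinuousWithinAt xcheck (Ioi t) t) :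
    xhat t = xcheck t := by
  obtain ⟨φ, hφ, hae⟩ := hmeasure.exists_seq_tendsto_ae
  have hfreq : ∃ᶠ s in 𝓝[>] t, Tendsto (fun k => xn (φ k) s) atTop (𝓝 (xhat s)) :=
    ((frequently_nhdsWithin_of_ae isOpen_Ioi (ae_imp_of_ae_restrict hae)).and_eventually
      (Ioo_mem_nhdsGT ht.2)).mono fun s hs => hs.1 ⟨ht.1.trans hs.2.1.le, hs.2.2.le⟩
  refine eq_of_forall_dist_le fun ε hε => ?_
  have hclose : ∃ᶠ s in 𝓝[>] t, dist (xhat s) (xcheck t) ≤ ε :=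
    (hfreq.and_eventually (hSkorokhod.eventually_nhdsGT_eventually_dist_lt ht hxcheck hε)).mono
      fun s hs => le_of_tendsto (hs.1.dist tendsto_const_nhds)
        ((hφ.tendsto_atTop.eventually hs.2).mono fun _ => le_of_lt)
  exact le_of_tendsto_of_frequently (hxhat.tendsto.dist tendsto_const_nhds) hclose

/-- If a sequence of càdlàg functions converges both in the Skorokhod sense (to `x̌`) and in
`L²([0,T])` (to `x̂`), then the two limits coincide on `[0,T)`. -/
theorem statement13 (T : ℝ) (hT : 0 < T)
    (xn : ℕ → ℝ → ℝ) (xhat xcheck : ℝ → ℝ)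
    (hxn : ∀ n, CadlagOn (xn n) T)
    (hxhat : CadlagOn xhat T) (hxcheck : CadlagOn xcheck T)
    (hSkorokhod : SkorokhodTendstoOn xn xcheck T)
    (hL2 : Filter.Tendsto (fun n => ∫ t in Set.Icc (0:ℝ) T, |xn n t - xhat t| ^ 2)
      Filter.atTop (nhds 0)) :
    ∀ t ∈ Set.Ico 0 T, xhat t = xcheck t := by
  have hmeasure := CadlagOn.tendstoInMeasure_of_tendsto_integral_sq hxn hxhat hL2
  exact fun t ht => statement13_general hSkorokhod hmeasure ht (hxhat.continuousWithinAt_Ioi ht)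
    (hxcheck.continuousWithinAt_Ioi ht)
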